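/- arXiv:2109.01629 — 3 statements merged into one kernel-verified Lean document; each statement's English description precedes it below -/
import Mathlib

section
/- Let H be a real inner product space and let P₁, P₂ : H → H be maps with P₂0 = 0. Suppose α, β ∈ [0,π] are such that θ(u, P₁u) ≤ α for every u ≠ 0 with P₁u ≠ 0, and θ(u, P₂u) ≤ β for every u ≠ 0 with P₂u ≠ 0. Then for every u ≠ 0 with P₂(P₁u) ≠ 0 one has θ(u, P₂(P₁u)) ≤ α + β. (This is the cascade bound θ(P₂P₁) ≤ θ(P₁) + θ(P₂) for the singular angle.) -/
open InnerProductGeometry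

/-- **Cascade bound for the singular angle**: if `P₁` has singular angle at most `α`
and `P₂` has singular angle at most `β` (with `P₂ 0 = 0`), then the cascade `P₂ ∘ P₁`
has singular angle at most `α + β`. The angle is
`θ(x,y) = arccos(⟪x,y⟫ / (‖x‖·‖y‖))`. -/
theorem cascade_singular_angle {H : Type*} [NormedAddCommGroup H]
    [InnerProductSpace ℝ H] (P₁ P₂ : H → H) (hP₂0 : P₂ 0 = 0) (α β : ℝ)
    (hα : α ∈ Set.Icc 0 Real.pi) (hβ : β ∈ Set.Icc 0 Real.pi)
    (h₁ : ∀ u : H, u ≠ 0 → P₁ u ≠ 0 → angle u (P₁ u) ≤ α)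
    (h₂ : ∀ u : H, u ≠ 0 → P₂ u ≠ 0 → angle u (P₂ u) ≤ β) :
    ∀ u : H, u ≠ 0 → P₂ (P₁ u) ≠ 0 → angle u (P₂ (P₁ u)) ≤ α + β := by
  intro u hu hPu
  have hP₁u : P₁ u ≠ 0 := fun h => hPu (by rw [h, hP₂0])
  exact (angle_le_angle_add_angle u (P₁ u) (P₂ (P₁ u))).trans
    (add_le_add (h₁ u hu hP₁u) (h₂ (P₁ u) hP₁u hPu))
end

section
/- Let 0 < a < b and let h : ℝ → ℝ be a measurable function in the sector [a,b]. Then (a+b)·x·h(x) ≥ a·b·x² + h(x)² for every x ∈ ℝ; consequently, for every square-integrable measurable u : ℝ → ℝ, the function t ↦ h(u(t)) is square-integrable, the function t ↦ u(t)·h(u(t)) is integrable, and ∫ u(t)·h(u(t)) dt ≥ (ab/(a+b))·∫ u(t)² dt + (1/(a+b))·∫ h(u(t))² dt. That is, the static nonlinearity N : u ↦ h∘u is very strictly passive with input index ab/(a+b) and output index 1/(a+b). -/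
open MeasureTheory

/-- **Sector bounded static nonlinearities are very strictly passive.**
If `h` is measurable and in the sector `[a,b]` with `0 < a < b`, then
`(a+b)·x·h(x) ≥ ab·x² + h(x)²` pointwise; consequently for every square-integrable
measurable `u`, `t ↦ h(u t)` is square-integrable, `t ↦ u t · h(u t)` is integrable,
and `∫ u·(h∘u) ≥ (ab/(a+b))·∫ u² + (1/(a+b))·∫ (h∘u)²`. -/
theorem sector_nonlinearity_very_strictly_passive
    (a b : ℝ) (ha : 0 < a) (hab : a < b) (h : ℝ → ℝ) (hmeas : Measurable h)
    (hsector : ∀ x : ℝ, (h x - a * x) * (h x - b * x) ≤ 0) :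
    (∀ x : ℝ, (a + b) * (x * h x) ≥ a * b * x ^ 2 + (h x) ^ 2) ∧
    ∀ u : ℝ → ℝ, Measurable u →
      Integrable (fun t => (u t) ^ 2) (volume : Measure ℝ) →
      Integrable (fun t => (h (u t)) ^ 2) (volume : Measure ℝ) ∧
      Integrable (fun t => u t * h (u t)) (volume : Measure ℝ) ∧
      (∫ t, u t * h (u t)) ≥
        (a * b / (a + b)) * (∫ t, (u t) ^ 2) + (1 / (a + b)) * (∫ t, (h (u t)) ^ 2) := by
  have hpos : 0 < a + b := by linarith
  have hpt : ∀ x : ℝ, (a + b) * (x * h x) ≥ a * b * x ^ 2 + (h x) ^ 2 := fun x => by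
    linarith [hsector x]
  refine ⟨hpt, fun u hu hu2 => ?_⟩
  have hhu : Measurable fun t => h (u t) := hmeas.comp hu
  have hh2 : Integrable (fun t => (h (u t)) ^ 2) (volume : Measure ℝ) := by
    refine (hu2.const_mul ((a + b) ^ 2)).mono' (hhu.pow_const 2).aestronglyMeasurable
      (.of_forall fun t => ?_)
    rw [Real.norm_of_nonneg (sq_nonneg _)]
    have hab_sq : 0 ≤ a * b * u t ^ 2 :=
      mul_nonneg (mul_nonneg ha.le (ha.trans hab).le) (sq_nonneg _)
    nlinarith [hpt (u t), sq_nonneg ((a + b) * u t - h (u t))]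
  have huh : Integrable (fun t => u t * h (u t)) (volume : Measure ℝ) :=
    MemLp.integrable_mul
      ((memLp_two_iff_integrable_sq hu.aestronglyMeasurable).2 hu2)
      ((memLp_two_iff_integrable_sq hhu.aestronglyMeasurable).2 hh2)
  refine ⟨hh2, huh, ?_⟩
  rw [ge_iff_le, ← integral_const_mul, ← integral_const_mul,
    ← integral_add (hu2.const_mul _) (hh2.const_mul _)]
  refine integral_mono ((hu2.const_mul _).add (hh2.const_mul _)) huh fun t => ?_
  calc a * b / (a + b) * u t ^ 2 + 1 / (a + b) * h (u t) ^ 2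
      = (a * b * u t ^ 2 + h (u t) ^ 2) / (a + b) := by ring
    _ ≤ u t * h (u t) := by
      rw [div_le_iff₀' hpos]
      exact hpt (u t)
end

section
/- Let 0 < a < b and let h : ℝ → ℝ be a measurable function in the sector [a,b]. Then for every square-integrable measurable u : ℝ → ℝ, ∫ u(t)·h(u(t)) dt ≥ (2√(ab)/(a+b))·(∫ u(t)² dt)^{1/2}·(∫ h(u(t))² dt)^{1/2}. Equivalently, the singular angle of the static nonlinearity N : u ↦ h∘u is at most arccos(2√(ab)/(a+b)) < π/2. -/
open MeasureTheory Real

/-- A function in the sector `[a,b]` satisfies `h(x)² ≤ (a+b)²x²`, a growth bound that suffices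
for integrability. -/
lemma sq_le_of_mem_sector {a b x y : ℝ} (ha : 0 ≤ a) (hb : 0 ≤ b)
    (hxy : (y - a * x) * (y - b * x) ≤ 0) : y ^ 2 ≤ (a + b) ^ 2 * x ^ 2 := by
  nlinarith [sq_nonneg (y - (a + b) * x), mul_nonneg (mul_nonneg ha hb) (sq_nonneg x)]

lemma integrable_mul_of_integrable_sq {α : Type*} [MeasurableSpace α] {μ : Measure α}
    {f g : α → ℝ} (hf : AEStronglyMeasurable f μ) (hg : AEStronglyMeasurable g μ)
    (hf2 : Integrable (fun t => f t ^ 2) μ) (hg2 : Integrable (fun t => g t ^ 2) μ) :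
    Integrable (fun t => f t * g t) μ :=
  ((memLp_two_iff_integrable_sq hf).2 hf2).integrable_mul
    ((memLp_two_iff_integrable_sq hg).2 hg2)

/-- **Singular angle of a sector bounded static nonlinearity.**
If `h` is measurable and in the sector `[a,b]` with `0 < a < b`, then for every
square-integrable measurable `u`,
`∫ u·(h∘u) ≥ (2√(ab)/(a+b))·(∫ u²)^{1/2}·(∫ (h∘u)²)^{1/2}`;
that is, the singular angle of the static nonlinearity `u ↦ h ∘ u` is at most
`arccos(2√(ab)/(a+b)) < π/2`. -/
theorem sector_nonlinearity_singular_angle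
    (a b : ℝ) (ha : 0 < a) (hab : a < b) (h : ℝ → ℝ) (hmeas : Measurable h)
    (hsector : ∀ x : ℝ, (h x - a * x) * (h x - b * x) ≤ 0) :
    (∀ u : ℝ → ℝ, Measurable u →
      Integrable (fun t => (u t) ^ 2) (volume : Measure ℝ) →
      (∫ t, u t * h (u t)) ≥
        (2 * Real.sqrt (a * b) / (a + b)) * Real.sqrt (∫ t, (u t) ^ 2) *
          Real.sqrt (∫ t, (h (u t)) ^ 2)) ∧
    Real.arccos (2 * Real.sqrt (a * b) / (a + b)) < π / 2 := by
  have hb : 0 < b := ha.trans hab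
  have hs : 0 < a + b := add_pos ha hb
  refine ⟨fun u hu hu2 => ?_, Real.arccos_lt_pi_div_two.2 (by positivity)⟩
  have hhu : Measurable fun t => h (u t) := hmeas.comp hu
  have hh2 : Integrable (fun t => h (u t) ^ 2) (volume : Measure ℝ) := by
    refine (hu2.const_mul ((a + b) ^ 2)).mono' (hhu.pow_const 2).aestronglyMeasurable ?_
    refine Filter.Eventually.of_forall fun t => ?_
    rw [Real.norm_of_nonneg (sq_nonneg _)]
    exact sq_le_of_mem_sector ha.le hb.le (hsector (u t))
  have huh : Integrable (fun t => u t * h (u t)) (volume : Measure ℝ) :=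
    integrable_mul_of_integrable_sq hu.aestronglyMeasurable hhu.aestronglyMeasurable hu2 hh2
  have key : (∫ t, h (u t) ^ 2) + a * b * ∫ t, u t ^ 2 ≤ (a + b) * ∫ t, u t * h (u t) := by
    rw [← integral_const_mul, ← integral_const_mul, ← integral_add hh2 (hu2.const_mul _)]
    refine integral_mono (hh2.add (hu2.const_mul _)) (huh.const_mul _) fun t => ?_
    dsimp only
    linarith [hsector (u t)]
  have hU : 0 ≤ ∫ t, u t ^ 2 := integral_nonneg fun t => sq_nonneg _
  have hH : 0 ≤ ∫ t, h (u t) ^ 2 := integral_nonneg fun t => sq_nonneg _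
  have amgm : 2 * √(a * b) * √(∫ t, u t ^ 2) * √(∫ t, h (u t) ^ 2) ≤
      (∫ t, h (u t) ^ 2) + a * b * ∫ t, u t ^ 2 := by
    have := two_mul_le_add_sq (√(a * b) * √(∫ t, u t ^ 2)) (√(∫ t, h (u t) ^ 2))
    rw [mul_pow, Real.sq_sqrt hU, Real.sq_sqrt hH, Real.sq_sqrt (mul_pos ha hb).le] at this
    linarith
  rw [ge_iff_le, div_mul_eq_mul_div, div_mul_eq_mul_div, div_le_iff₀ hs]
  linarith
end
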